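/- arXiv:2107.01394 — 2 statements merged into one kernel-verified Lean document; each statement's English description precedes it below -/
import Mathlib

section
/- Let α, β ≥ 0 with α ≠ β, and let F₁(x,y) = (y(1+βxy)/(1+αxy), x(1+αxy)/(1+βxy)) on (0,∞)². If X and Y are independent (0,∞)-valued random variables with X ~ GIG(λ, c₁α, c₂) and Y ~ GIG(λ, c₂β, c₁) for some λ ∈ ℝ and c₁, c₂ > 0, then (U,V) := F₁(X,Y) are independent, with U ~ GIG(λ, c₂α, c₁) and V ~ GIG(λ, c₁β, c₂). -/
/-!
Put `φ t = (1 + β t) / (1 + α t)`. Then `F₁(x, y) = (y φ(xy), x / φ(xy))`. For every positive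
differentiable `φ` a map of this shape is an involution of the open quadrant that preserves the
product `xy` and, having Jacobian determinant `-1`, Lebesgue measure. The product of the two
unnormalised GIG weights of `(X, Y)` is `(xy)^(l-1) exp(-(c₁(1 + αxy)/y + c₂(1 + βxy)/x))`;
substituting `(u, v) = F₁(x, y)` turns `(1 + αxy)/y` into `(1 + βuv)/u` and `(1 + βxy)/x` into
`(1 + αuv)/v`, which gives the product of the two weights of `(U, V)`. Normalising a measure
commutes with products and with push-forwards, so the normalising constants need not be compared.
-/

open MeasureTheory ProbabilityTheory Set

/-- Density of the generalized inverse Gaussian distribution GIG(l, c1, c2):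
proportional to `x^(l-1) * exp(-c1*x - c2/x)` on `(0,∞)`. -/
noncomputable def gigPdf (l c1 c2 : ℝ) : ℝ → ℝ := fun x =>
  if 0 < x then
    x ^ (l - 1) * Real.exp (-(c1 * x) - c2 / x) /
      (∫ t in Set.Ioi (0 : ℝ), t ^ (l - 1) * Real.exp (-(c1 * t) - c2 / t))
  else 0

/-- The transformation F₁ with parameters α, β. -/
noncomputable def F1 (α β : ℝ) : ℝ × ℝ → ℝ × ℝ := fun p =>
  (p.2 * (1 + β * p.1 * p.2) / (1 + α * p.1 * p.2),
   p.1 * (1 + α * p.1 * p.2) / (1 + β * p.1 * p.2))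

open scoped ENNReal

section Normalization

variable {S T : Type*} [MeasurableSpace S] [MeasurableSpace T] {μ : Measure S} {ν : Measure T}

variable (μ ν) in
lemma prod_cond_univ [SFinite μ] [SFinite ν] :
    (μ[|univ]).prod (ν[|univ]) = (μ.prod ν)[|univ] := by
  rcases eq_or_ne μ 0 with rfl | hμ
  · simp [ProbabilityTheory.cond]
  rcases eq_or_ne ν 0 with rfl | hν
  · simp [ProbabilityTheory.cond]
  have inv_mass : (μ.prod ν univ)⁻¹ = (μ univ)⁻¹ * (ν univ)⁻¹ := by
    rw [← univ_prod_univ, Measure.prod_prod]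
    exact ENNReal.mul_inv (.inl <| Measure.measure_univ_ne_zero.2 hμ)
      (.inr <| Measure.measure_univ_ne_zero.2 hν)
  simp only [ProbabilityTheory.cond, Measure.restrict_univ, Measure.prod_smul_left,
    Measure.prod_smul_right, smul_smul, inv_mass, mul_comm]

lemma measurePreserving_cond_univ {f : S → T} (hf : MeasurePreserving f μ ν) :
    MeasurePreserving f (μ[|univ]) (ν[|univ]) := by
  refine ⟨hf.measurable, ?_⟩
  have same_mass : μ univ = ν univ := hf.measure_preimage MeasurableSet.univ.nullMeasurableSet
  simp only [ProbabilityTheory.cond, Measure.restrict_univ, Measure.map_smul, hf.map_eq,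
    same_mass]

-- If `f` is not integrable, its Bochner integral is `0` by convention and both sides vanish.
lemma withDensity_div_integral_eq_cond_univ {f : S → ℝ} (hfm : AEMeasurable f μ)
    (hf : 0 ≤ᵐ[μ] f) :
    μ.withDensity (fun x => ENNReal.ofReal (f x / ∫ t, f t ∂μ)) =
      (μ.withDensity fun x => ENNReal.ofReal (f x))[|univ] := by
  set m := μ.withDensity fun x => ENNReal.ofReal (f x) with hm
  have integral_eq : ∫ t, f t ∂μ = (m univ).toReal := by
    rw [integral_eq_lintegral_of_nonneg_ae hf hfm.aestronglyMeasurable, hm,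
      withDensity_apply _ MeasurableSet.univ, Measure.restrict_univ]
  have factor (x : S) : ENNReal.ofReal (f x / ∫ t, f t ∂μ) =
      ENNReal.ofReal (∫ t, f t ∂μ)⁻¹ * ENNReal.ofReal (f x) := by
    rw [div_eq_inv_mul, ENNReal.ofReal_mul (inv_nonneg.2 (integral_nonneg_of_ae hf))]
  have scaled : μ.withDensity (fun x => ENNReal.ofReal (f x / ∫ t, f t ∂μ)) =
      ENNReal.ofReal (∫ t, f t ∂μ)⁻¹ • m := by
    simp only [factor]
    exact withDensity_smul' _ _ ENNReal.ofReal_ne_top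
  rcases eq_or_ne m 0 with h0 | h0
  · simp [scaled, h0, ProbabilityTheory.cond]
  · rw [scaled, integral_eq, ← ENNReal.toReal_inv, ENNReal.ofReal_toReal
      (ENNReal.inv_ne_top.2 <| Measure.measure_univ_ne_zero.2 h0), ProbabilityTheory.cond,
      Measure.restrict_univ]

lemma measurePreserving_withDensity {f : S → T} (hf : MeasurePreserving f μ ν)
    {p : S → ℝ≥0∞} {q : T → ℝ≥0∞} (hq : Measurable q) (hpq : p =ᵐ[μ] q ∘ f) :
    MeasurePreserving f (μ.withDensity p) (ν.withDensity q) := by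
  refine ⟨hf.measurable, ?_⟩
  ext s hs
  rw [withDensity_congr_ae hpq, Measure.map_apply hf.measurable hs,
    withDensity_apply _ (hf.measurable hs), withDensity_apply _ hs]
  exact hf.setLIntegral_comp_preimage hs hq

lemma indepFun_and_hasLaw_of_hasLaw_prodMk {Ω : Type*} [MeasurableSpace Ω] {P : Measure Ω}
    [IsProbabilityMeasure P] [IsZeroOrProbabilityMeasure μ] [IsZeroOrProbabilityMeasure ν]
    {U : Ω → S} {V : Ω → T} (h : HasLaw (fun ω => (U ω, V ω)) (μ.prod ν) P) :
    IndepFun U V P ∧ HasLaw U μ P ∧ HasLaw V ν P := by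
  have : IsProbabilityMeasure (μ.prod ν) := h.isProbabilityMeasure_iff.1 inferInstance
  have hμν : μ.prod ν ≠ 0 := IsProbabilityMeasure.ne_zero _
  have : IsProbabilityMeasure μ :=
    (eq_zero_or_isProbabilityMeasure μ).resolve_left fun h0 => hμν (by simp [h0])
  have : IsProbabilityMeasure ν :=
    (eq_zero_or_isProbabilityMeasure ν).resolve_left fun h0 => hμν (by simp [h0])
  have hU : HasLaw U μ P := measurePreserving_fst.fun_comp_hasLaw h
  have hV : HasLaw V ν P := measurePreserving_snd.fun_comp_hasLaw h
  exact ⟨(indepFun_iff_hasLaw_prodMk_prod hU hV).2 h, hU, hV⟩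

end Normalization

/-- The map `(x, y) ↦ (y φ(xy), x / φ(xy))`: the coordinate swap followed by a rescaling along the
hyperbola `xy = t` with a factor `φ t` depending only on the hyperbola. -/
noncomputable def hyperbolicSwap (φ : ℝ → ℝ) (p : ℝ × ℝ) : ℝ × ℝ :=
  (p.2 * φ (p.1 * p.2), p.1 / φ (p.1 * p.2))

/-- The derivative of `hyperbolicSwap φ` at `p`, given by its matrix in the standard basis;
meaningful when `φ` is differentiable and nonzero at `p.1 * p.2`. -/
noncomputable def hyperbolicSwapFDeriv (φ : ℝ → ℝ) (p : ℝ × ℝ) : ℝ × ℝ →L[ℝ] ℝ × ℝ :=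
  let t := p.1 * p.2
  (Matrix.toLin (.finTwoProd ℝ) (.finTwoProd ℝ)
    !![p.2 ^ 2 * deriv φ t, φ t + t * deriv φ t;
      1 / φ t - t * deriv φ t / φ t ^ 2, -(p.1 ^ 2 * deriv φ t / φ t ^ 2)]).toContinuousLinearMap

section HyperbolicSwap

variable {φ : ℝ → ℝ} {p : ℝ × ℝ}

lemma measurable_hyperbolicSwap (hφ : Measurable φ) : Measurable (hyperbolicSwap φ) := by
  unfold hyperbolicSwap
  fun_prop

lemma hyperbolicSwap_fst_mul_snd (h : φ (p.1 * p.2) ≠ 0) :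
    (hyperbolicSwap φ p).1 * (hyperbolicSwap φ p).2 = p.1 * p.2 := by
  rw [hyperbolicSwap, mul_assoc, mul_div_cancel₀ _ h, mul_comm]

lemma hyperbolicSwap_hyperbolicSwap (h : φ (p.1 * p.2) ≠ 0) :
    hyperbolicSwap φ (hyperbolicSwap φ p) = p := by
  rw [hyperbolicSwap, hyperbolicSwap_fst_mul_snd h]
  exact Prod.ext (div_mul_cancel₀ _ h) (mul_div_cancel_right₀ _ h)

lemma hyperbolicSwap_mem_quadrant (hφ : ∀ t, 0 < t → 0 < φ t)
    (hp : p ∈ Ioi (0 : ℝ) ×ˢ Ioi (0 : ℝ)) :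
    hyperbolicSwap φ p ∈ Ioi (0 : ℝ) ×ˢ Ioi (0 : ℝ) :=
  have hφp := hφ _ (mul_pos hp.1 hp.2)
  ⟨mul_pos hp.2 hφp, div_pos hp.1 hφp⟩

lemma bijOn_hyperbolicSwap_quadrant (hφ : ∀ t, 0 < t → 0 < φ t) :
    BijOn (hyperbolicSwap φ) (Ioi (0 : ℝ) ×ˢ Ioi (0 : ℝ)) (Ioi (0 : ℝ) ×ˢ Ioi (0 : ℝ)) :=
  have involutive : LeftInvOn (hyperbolicSwap φ) (hyperbolicSwap φ) (Ioi 0 ×ˢ Ioi 0) :=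
    fun _ hp => hyperbolicSwap_hyperbolicSwap (hφ _ (mul_pos hp.1 hp.2)).ne'
  have mapsTo : MapsTo (hyperbolicSwap φ) (Ioi 0 ×ˢ Ioi 0) (Ioi 0 ×ˢ Ioi 0) :=
    fun _ => hyperbolicSwap_mem_quadrant hφ
  InvOn.bijOn ⟨involutive, involutive⟩ mapsTo mapsTo

lemma hasFDerivAt_hyperbolicSwap (hd : DifferentiableAt ℝ φ (p.1 * p.2))
    (h : φ (p.1 * p.2) ≠ 0) :
    HasFDerivAt (hyperbolicSwap φ) (hyperbolicSwapFDeriv φ p) p := by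
  have h_fst : HasFDerivAt Prod.fst (ContinuousLinearMap.fst ℝ ℝ ℝ) p := hasFDerivAt_fst
  have h_snd : HasFDerivAt Prod.snd (ContinuousLinearMap.snd ℝ ℝ ℝ) p := hasFDerivAt_snd
  have h_φ := hd.hasDerivAt.comp_hasFDerivAt p (h_fst.mul h_snd)
  have h_inv := (hasDerivAt_inv h).comp_hasFDerivAt p h_φ
  rw [hyperbolicSwapFDeriv, Matrix.toLin_finTwoProd_toContinuousLinearMap]
  refine HasFDerivAt.congr_fderiv (f := hyperbolicSwap φ)
    ((h_snd.mul h_φ).prodMk (h_fst.mul h_inv)) ?_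
  ext <;> simp <;> ring

lemma det_hyperbolicSwapFDeriv (h : φ (p.1 * p.2) ≠ 0) :
    (hyperbolicSwapFDeriv φ p).det = -1 := by
  simp only [hyperbolicSwapFDeriv, LinearMap.det_toContinuousLinearMap, LinearMap.det_toLin,
    Matrix.det_fin_two_of]
  generalize φ (p.1 * p.2) = c at h ⊢
  field_simp
  ring

lemma measurePreserving_hyperbolicSwap (hm : Measurable φ)
    (hd : ∀ t, 0 < t → DifferentiableAt ℝ φ t) (hφ : ∀ t, 0 < t → 0 < φ t) :
    MeasurePreserving (hyperbolicSwap φ) (volume.restrict (Ioi 0 ×ˢ Ioi 0))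
      (volume.restrict (Ioi 0 ×ˢ Ioi 0)) := by
  have hQ : MeasurableSet (Ioi (0 : ℝ) ×ˢ Ioi (0 : ℝ)) := measurableSet_Ioi.prod measurableSet_Ioi
  have change_of_variables := map_withDensity_abs_det_fderiv_eq_addHaar
    (volume : Measure (ℝ × ℝ)) hQ.nullMeasurableSet
    (fun p hp => (hasFDerivAt_hyperbolicSwap (hd _ (mul_pos hp.1 hp.2))
      (hφ _ (mul_pos hp.1 hp.2)).ne').hasFDerivWithinAt)
    (bijOn_hyperbolicSwap_quadrant hφ).injOn
  have unit_jacobian : (fun p => ENNReal.ofReal |(hyperbolicSwapFDeriv φ p).det|)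
      =ᵐ[volume.restrict (Ioi 0 ×ˢ Ioi 0)] 1 := by
    filter_upwards [ae_restrict_mem hQ] with p hp
    simp [det_hyperbolicSwapFDeriv (hφ _ (mul_pos hp.1 hp.2)).ne']
  rw [withDensity_congr_ae unit_jacobian, withDensity_one,
    (bijOn_hyperbolicSwap_quadrant hφ).image_eq] at change_of_variables
  exact ⟨measurable_hyperbolicSwap hm, change_of_variables⟩

end HyperbolicSwap

section F1

variable {α β : ℝ}

lemma F1_eq_hyperbolicSwap (α β : ℝ) :
    F1 α β = hyperbolicSwap fun t => (1 + β * t) / (1 + α * t) := by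
  ext p <;> simp only [F1, hyperbolicSwap, mul_assoc, mul_div_assoc, div_div_eq_mul_div]

lemma measurePreserving_F1 (hα : 0 ≤ α) (hβ : 0 ≤ β) :
    MeasurePreserving (F1 α β) (volume.restrict (Ioi 0 ×ˢ Ioi 0))
      (volume.restrict (Ioi 0 ×ˢ Ioi 0)) := by
  rw [F1_eq_hyperbolicSwap]
  refine measurePreserving_hyperbolicSwap (by fun_prop) (fun t ht => ?_) fun t ht => by positivity
  have : 1 + α * t ≠ 0 := by positivity
  fun_prop (disch := assumption)

end F1

/-- The density of `GIG(l, a, b)` on `(0, ∞)` without its normalising constant. -/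
noncomputable def gigWeight (l a b x : ℝ) : ℝ :=
  x ^ (l - 1) * Real.exp (-(a * x) - b / x)

/-- The measure on `(0, ∞)` with density `gigWeight l a b`. -/
noncomputable def gigWeightMeasure (l a b : ℝ) : Measure ℝ :=
  (volume.restrict (Ioi 0)).withDensity fun x => ENNReal.ofReal (gigWeight l a b x)

/-- The distribution `GIG(l, a, b)`; it is the zero measure when `gigWeight l a b` is not integrable
on `(0, ∞)`. -/
noncomputable def gigMeasure (l a b : ℝ) : Measure ℝ :=
  volume.withDensity fun x => ENNReal.ofReal (gigPdf l a b x)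

section GIG

@[fun_prop]
lemma measurable_gigWeight (l a b : ℝ) : Measurable (gigWeight l a b) := by
  unfold gigWeight
  fun_prop

lemma gigWeight_pos (l a b : ℝ) {x : ℝ} (hx : 0 < x) : 0 < gigWeight l a b x := by
  unfold gigWeight
  positivity

instance (l a b : ℝ) : SFinite (gigWeightMeasure l a b) := by
  unfold gigWeightMeasure
  infer_instance

lemma gigMeasure_eq_cond_gigWeightMeasure (l a b : ℝ) :
    gigMeasure l a b = (gigWeightMeasure l a b)[|univ] := by
  have pdf_eq_indicator : (fun x => ENNReal.ofReal (gigPdf l a b x)) = (Ioi 0).indicator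
      fun x => ENNReal.ofReal (gigWeight l a b x / ∫ t in Ioi 0, gigWeight l a b t) := by
    ext x
    by_cases hx : 0 < x <;> simp [gigPdf, gigWeight, hx]
  rw [gigMeasure, pdf_eq_indicator, withDensity_indicator measurableSet_Ioi]
  refine withDensity_div_integral_eq_cond_univ (by fun_prop) ?_
  filter_upwards [ae_restrict_mem measurableSet_Ioi] with x hx
  exact (gigWeight_pos l a b hx).le

instance (l a b : ℝ) : IsZeroOrProbabilityMeasure (gigMeasure l a b) := by
  rw [gigMeasure_eq_cond_gigWeightMeasure]
  infer_instance

lemma gigWeightMeasure_prod (l a b l' a' b' : ℝ) :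
    (gigWeightMeasure l a b).prod (gigWeightMeasure l' a' b') =
      (volume.restrict (Ioi 0 ×ˢ Ioi 0)).withDensity fun p =>
        ENNReal.ofReal (gigWeight l a b p.1 * gigWeight l' a' b' p.2) := by
  rw [gigWeightMeasure, gigWeightMeasure, prod_withDensity (by fun_prop) (by fun_prop),
    Measure.prod_restrict, ← Measure.volume_eq_prod]
  refine withDensity_congr_ae ?_
  filter_upwards [ae_restrict_mem (measurableSet_Ioi.prod measurableSet_Ioi)] with p hp
  exact (ENNReal.ofReal_mul (gigWeight_pos l a b hp.1).le).symm

lemma gigWeight_mul_gigWeight (l a b a' b' : ℝ) {x y : ℝ} (hx : 0 ≤ x) (hy : 0 ≤ y) :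
    gigWeight l a b x * gigWeight l a' b' y =
      (x * y) ^ (l - 1) * Real.exp (-((a * x + b' / y) + (b / x + a' * y))) := by
  rw [gigWeight, gigWeight, mul_mul_mul_comm, ← Real.mul_rpow hx hy, ← Real.exp_add]
  ring_nf

variable {α β : ℝ}

lemma gigWeight_F1_mul_gigWeight_F1 (hα : 0 ≤ α) (hβ : 0 ≤ β) (l c₁ c₂ : ℝ) {p : ℝ × ℝ}
    (hp : p ∈ Ioi (0 : ℝ) ×ˢ Ioi (0 : ℝ)) :
    gigWeight l (c₂ * α) c₁ (F1 α β p).1 * gigWeight l (c₁ * β) c₂ (F1 α β p).2 =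
      gigWeight l (c₁ * α) c₂ p.1 * gigWeight l (c₂ * β) c₁ p.2 := by
  obtain ⟨x, y⟩ := p
  obtain ⟨hx : 0 < x, hy : 0 < y⟩ := hp
  have product : (F1 α β (x, y)).1 * (F1 α β (x, y)).2 = x * y := by
    rw [F1_eq_hyperbolicSwap]
    exact hyperbolicSwap_fst_mul_snd (by positivity)
  have exponent₁ : c₁ / (F1 α β (x, y)).1 + c₁ * β * (F1 α β (x, y)).2 =
      c₁ * α * x + c₁ / y := by
    simp only [F1]
    field_simp
    ring
  have exponent₂ : c₂ * α * (F1 α β (x, y)).1 + c₂ / (F1 α β (x, y)).2 =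
      c₂ / x + c₂ * β * y := by
    simp only [F1]
    field_simp
    ring
  have hu : 0 ≤ (F1 α β (x, y)).1 := by simp only [F1]; positivity
  have hv : 0 ≤ (F1 α β (x, y)).2 := by simp only [F1]; positivity
  rw [gigWeight_mul_gigWeight _ _ _ _ _ hu hv, gigWeight_mul_gigWeight _ _ _ _ _ hx.le hy.le,
    product, exponent₁, exponent₂, add_comm]

lemma measurePreserving_F1_gigWeightMeasure (hα : 0 ≤ α) (hβ : 0 ≤ β) (l c₁ c₂ : ℝ) :
    MeasurePreserving (F1 α β)
      ((gigWeightMeasure l (c₁ * α) c₂).prod (gigWeightMeasure l (c₂ * β) c₁))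
      ((gigWeightMeasure l (c₂ * α) c₁).prod (gigWeightMeasure l (c₁ * β) c₂)) := by
  rw [gigWeightMeasure_prod, gigWeightMeasure_prod]
  refine measurePreserving_withDensity (measurePreserving_F1 hα hβ) (by fun_prop) ?_
  filter_upwards [ae_restrict_mem (measurableSet_Ioi.prod measurableSet_Ioi)] with p hp
  simp only [Function.comp_apply, gigWeight_F1_mul_gigWeight_F1 hα hβ l c₁ c₂ hp]

lemma measurePreserving_F1_gigMeasure (hα : 0 ≤ α) (hβ : 0 ≤ β) (l c₁ c₂ : ℝ) :
    MeasurePreserving (F1 α β)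
      ((gigMeasure l (c₁ * α) c₂).prod (gigMeasure l (c₂ * β) c₁))
      ((gigMeasure l (c₂ * α) c₁).prod (gigMeasure l (c₁ * β) c₂)) := by
  simp only [gigMeasure_eq_cond_gigWeightMeasure, prod_cond_univ]
  exact measurePreserving_cond_univ (measurePreserving_F1_gigWeightMeasure hα hβ l c₁ c₂)

end GIG

theorem gig_if_part
    {Ω : Type*} [MeasureSpace Ω] [IsProbabilityMeasure (ℙ : Measure Ω)]
    (α β : ℝ) (hα : 0 ≤ α) (hβ : 0 ≤ β) (hαβ : α ≠ β)
    (X Y : Ω → ℝ) (hXm : Measurable X) (hYm : Measurable Y)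
    (hXpos : ∀ ω, 0 < X ω) (hYpos : ∀ ω, 0 < Y ω)
    (hIndep : IndepFun X Y ℙ)
    (l c1 c2 : ℝ) (hc1 : 0 < c1) (hc2 : 0 < c2)
    (hX : Measure.map X ℙ =
      volume.withDensity (fun x => ENNReal.ofReal (gigPdf l (c1 * α) c2 x)))
    (hY : Measure.map Y ℙ =
      volume.withDensity (fun x => ENNReal.ofReal (gigPdf l (c2 * β) c1 x))) :
    IndepFun (fun ω => (F1 α β (X ω, Y ω)).1) (fun ω => (F1 α β (X ω, Y ω)).2) ℙ ∧
      Measure.map (fun ω => (F1 α β (X ω, Y ω)).1) ℙ =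
        volume.withDensity (fun x => ENNReal.ofReal (gigPdf l (c2 * α) c1 x)) ∧
      Measure.map (fun ω => (F1 α β (X ω, Y ω)).2) ℙ =
        volume.withDensity (fun x => ENNReal.ofReal (gigPdf l (c1 * β) c2 x)) := by
  have hX_law : HasLaw X (gigMeasure l (c1 * α) c2) ℙ := ⟨hXm.aemeasurable, hX⟩
  have hY_law : HasLaw Y (gigMeasure l (c2 * β) c1) ℙ := ⟨hYm.aemeasurable, hY⟩
  have hXY_law := hIndep.hasLaw_prod hX_law hY_law
  have hUV_law := (measurePreserving_F1_gigMeasure hα hβ l c1 c2).fun_comp_hasLaw hXY_law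
  obtain ⟨hUV, hU, hV⟩ := indepFun_and_hasLaw_of_hasLaw_prodMk hUV_law
  exact ⟨hUV, hU.map_eq, hV.map_eq⟩
end

section
/- Let c₁, c₂ > 0 and let F₃(x,y) = (min{−x,y}, y + x − min{−x,y}). If X and Y are independent ℝ-valued random variables with X ~ stExp(λ, −c₁, c₂) and Y ~ sExp(λ, −c₂) for some λ > 0, then (U,V) := F₃(X,Y) are independent, with U ~ stExp(λ, −c₂, c₁) and V ~ sExp(λ, −c₁). -/
open MeasureTheory ProbabilityTheory Set

/-- Density of the shifted exponential distribution sExp(l, c):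
`(1/Z) e^{-l x} 1_{[c,∞)}(x)` with `Z = (1/l) e^{-l c}`. -/
noncomputable def sExpPdf (l c : ℝ) : ℝ → ℝ := fun x =>
  if c ≤ x then Real.exp (-(l * x)) / ((1 / l) * Real.exp (-(l * c))) else 0

/-- Density of the shifted truncated exponential distribution stExp(l, c1, c2):
`(1/Z) e^{-l x} 1_{[c1,c2]}(x)` with `Z = (1/l)(e^{-l c1} - e^{-l c2})`. -/
noncomputable def stExpPdf (l c1 c2 : ℝ) : ℝ → ℝ := fun x =>
  if c1 ≤ x ∧ x ≤ c2 then
    Real.exp (-(l * x)) / ((1 / l) * (Real.exp (-(l * c1)) - Real.exp (-(l * c2))))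
  else 0

/-- The transformation F₃. -/
noncomputable def F3 : ℝ × ℝ → ℝ × ℝ := fun p =>
  (min (-p.1) p.2, p.2 + p.1 - min (-p.1) p.2)

/-!
Write `s = x + y`. Then `F₃(x, y) = (y - s⁺, x + s⁺)`: the map swaps the coordinates and then moves
along the fibre of the sum, by an amount depending on `s` alone. Hence it preserves Lebesgue measure
and the sum, and it is an involution. The density of `stExp(l, -a, b) ⊗ sExp(l, -b)` is, up to a
normalising constant symmetric in `a` and `b`, equal to `e^{-l (x + y)}` on the set where `-a ≤ x`
and `-b ≤ F₃(x, y)₁`. Exchanging `(x, y)` with `F₃(x, y)` therefore amounts to exchanging `a` with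
`b`, so `F₃` maps this product measure to `stExp(l, -b, a) ⊗ sExp(l, -a)`.
-/

theorem measurePreserving_withDensity_comp {α β : Type*} [MeasurableSpace α] [MeasurableSpace β]
    {μ : Measure α} {ν : Measure β} {T : α → β} (hT : MeasurePreserving T μ ν)
    {f : β → ENNReal} (hf : Measurable f) :
    MeasurePreserving T (μ.withDensity (f ∘ T)) (ν.withDensity f) := by
  refine ⟨hT.measurable, Measure.ext fun s hs ↦ ?_⟩
  rw [Measure.map_apply hT.measurable hs, withDensity_apply _ (hT.measurable hs),
    withDensity_apply _ hs]
  exact hT.setLIntegral_comp_preimage hs hf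

theorem measurePreserving_swap_add_fun_sum {G : Type*} [AddCommGroup G] [MeasurableSpace G]
    [MeasurableAdd₂ G] [MeasurableNeg G] (μ ν : Measure G) [SFinite μ] [SFinite ν]
    [μ.IsAddRightInvariant] [ν.IsAddRightInvariant] {h : G → G} (hh : Measurable h) :
    MeasurePreserving (fun p : G × G ↦ (p.2 - h (p.1 + p.2), p.1 + h (p.1 + p.2)))
      (μ.prod ν) (ν.prod μ) := by
  -- In the coordinates `(x + y, y)` the map translates `y` along each fibre of `x + y`.
  have shift_snd : MeasurePreserving (fun p : G × G ↦ (p.1, p.2 - h p.1))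
      (μ.prod ν) (μ.prod ν) :=
    (MeasurePreserving.id μ).skew_product (g := fun s y ↦ y - h s) (by fun_prop)
      (.of_forall fun s ↦ (measurePreserving_sub_right ν (h s)).map_eq)
  convert ((measurePreserving_prod_sub_swap μ ν).comp shift_snd).comp
    (measurePreserving_add_prod μ ν) using 1
  ext p
  · rfl
  · simp only [Function.comp_apply]
    abel

theorem F3_eq (p : ℝ × ℝ) :
    F3 p = (p.2 - max (p.1 + p.2) 0, p.1 + max (p.1 + p.2) 0) := by
  have min_eq : min (-p.1) p.2 = p.2 - max (p.1 + p.2) 0 := by grind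
  simp only [F3, min_eq, Prod.mk.injEq, true_and]
  ring

theorem measurePreserving_F3 : MeasurePreserving F3 volume volume := by
  rw [funext F3_eq]
  exact measurePreserving_swap_add_fun_sum volume volume (h := (max · 0)) (by fun_prop)

theorem F3_fst_add_snd (p : ℝ × ℝ) : (F3 p).1 + (F3 p).2 = p.1 + p.2 := by
  rw [F3_eq]
  ring

theorem involutive_F3 : Function.Involutive F3 := by
  intro p
  rw [F3_eq (F3 p), F3_fst_add_snd, F3_eq]
  simp

theorem neg_le_F3_fst_iff {b : ℝ} {p : ℝ × ℝ} : -b ≤ (F3 p).1 ↔ p.1 ≤ b ∧ -b ≤ p.2 := by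
  rw [F3, le_min_iff, neg_le_neg_iff]

theorem measurable_sExpPdf (l c : ℝ) : Measurable (sExpPdf l c) :=
  Measurable.ite measurableSet_Ici (by fun_prop) (by fun_prop)

theorem measurable_stExpPdf (l c₁ c₂ : ℝ) : Measurable (stExpPdf l c₁ c₂) :=
  Measurable.ite measurableSet_Icc (by fun_prop) (by fun_prop)

theorem sExpPdf_nonneg {l : ℝ} (hl : 0 ≤ l) (c x : ℝ) : 0 ≤ sExpPdf l c x := by
  unfold sExpPdf
  split_ifs <;> positivity

theorem ofReal_sExpPdf_eq_exponentialPDF (l c x : ℝ) :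
    ENNReal.ofReal (sExpPdf l c x) = exponentialPDF l (x - c) := by
  have density_eq :
      Real.exp (-(l * x)) / (1 / l * Real.exp (-(l * c))) = l * Real.exp (-(l * (x - c))) := by
    rw [show -(l * (x - c)) = -(l * x) - -(l * c) by ring, Real.exp_sub, one_div,
      mul_comm l⁻¹, ← div_div, div_inv_eq_mul, mul_comm]
  simp only [sExpPdf, exponentialPDF_eq, sub_nonneg, density_eq]

theorem stExpPdf_mul_sExpPdf (l a b : ℝ) (p : ℝ × ℝ) :
    stExpPdf l (-a) b p.1 * sExpPdf l (-b) p.2 =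
      if -a ≤ p.1 ∧ -b ≤ (F3 p).1 then
        l ^ 2 * Real.exp (-(l * (p.1 + p.2))) / (Real.exp (l * (a + b)) - 1)
      else 0 := by
  have normalizer_eq : (Real.exp (-(l * -a)) - Real.exp (-(l * b))) * Real.exp (-(l * -b)) =
      Real.exp (l * (a + b)) - 1 := by
    rw [sub_mul, ← Real.exp_add, ← Real.exp_add, ← Real.exp_zero]
    ring_nf
  rw [stExpPdf, sExpPdf, ite_zero_mul_ite_zero]
  refine if_congr (by rw [neg_le_F3_fst_iff, and_assoc]) ?_ rfl
  rw [← normalizer_eq, mul_add, neg_add, Real.exp_add]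
  simp only [div_eq_mul_inv, mul_inv, one_mul, inv_inv]
  ring

theorem stExpPdf_mul_sExpPdf_F3 (l a b : ℝ) (p : ℝ × ℝ) :
    stExpPdf l (-b) a (F3 p).1 * sExpPdf l (-a) (F3 p).2 =
      stExpPdf l (-a) b p.1 * sExpPdf l (-b) p.2 := by
  simp only [stExpPdf_mul_sExpPdf, involutive_F3 p, F3_fst_add_snd, and_comm, add_comm a b]

/-- The shifted exponential distribution sExp(l, c), defined through its density. It is a
probability measure for `0 < l` and the zero measure for other rates. -/
noncomputable def sExpMeasure (l c : ℝ) : Measure ℝ :=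
  volume.withDensity fun x ↦ ENNReal.ofReal (sExpPdf l c x)

/-- The shifted truncated exponential distribution stExp(l, c₁, c₂), defined through its
density. It is the zero measure when `c₂ ≤ c₁`. -/
noncomputable def stExpMeasure (l c₁ c₂ : ℝ) : Measure ℝ :=
  volume.withDensity fun x ↦ ENNReal.ofReal (stExpPdf l c₁ c₂ x)

instance (l c : ℝ) : SFinite (sExpMeasure l c) := by
  unfold sExpMeasure
  infer_instance

theorem isProbabilityMeasure_sExpMeasure {l : ℝ} (hl : 0 < l) (c : ℝ) :
    IsProbabilityMeasure (sExpMeasure l c) := by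
  constructor
  simp only [sExpMeasure, withDensity_apply _ MeasurableSet.univ, Measure.restrict_univ,
    ofReal_sExpPdf_eq_exponentialPDF]
  rw [lintegral_sub_right_eq_self (exponentialPDF l), lintegral_exponentialPDF_eq_one hl]

theorem stExpMeasure_prod_sExpMeasure {l : ℝ} (hl : 0 ≤ l) (c₁ c₂ c : ℝ) :
    (stExpMeasure l c₁ c₂).prod (sExpMeasure l c) =
      volume.withDensity fun p ↦ ENNReal.ofReal (stExpPdf l c₁ c₂ p.1 * sExpPdf l c p.2) := by
  rw [stExpMeasure, sExpMeasure, prod_withDensity (measurable_stExpPdf l c₁ c₂).ennreal_ofReal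
    (measurable_sExpPdf l c).ennreal_ofReal, ← Measure.volume_eq_prod]
  simp only [ENNReal.ofReal_mul' (sExpPdf_nonneg hl c _)]

theorem measurePreserving_F3_stExpMeasure_prod_sExpMeasure {l : ℝ} (hl : 0 ≤ l) (a b : ℝ) :
    MeasurePreserving F3 ((stExpMeasure l (-a) b).prod (sExpMeasure l (-b)))
      ((stExpMeasure l (-b) a).prod (sExpMeasure l (-a))) := by
  have measurable_density :
      Measurable fun p : ℝ × ℝ ↦ stExpPdf l (-b) a p.1 * sExpPdf l (-a) p.2 :=
    ((measurable_stExpPdf l (-b) a).comp measurable_fst).mul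
      ((measurable_sExpPdf l (-a)).comp measurable_snd)
  have preserves := measurePreserving_withDensity_comp measurePreserving_F3
    measurable_density.ennreal_ofReal
  simpa only [stExpMeasure_prod_sExpMeasure hl, Function.comp_def, stExpPdf_mul_sExpPdf_F3]
    using preserves

theorem indepFun_and_hasLaw_of_hasLaw_prod {Ω α β : Type*} [MeasurableSpace Ω] [MeasurableSpace α]
    [MeasurableSpace β] {P : Measure Ω} [IsProbabilityMeasure P] {μ : Measure α} {ν : Measure β}
    [IsProbabilityMeasure ν] {Z : Ω → α × β} (hZ : HasLaw Z (μ.prod ν) P) :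
    IndepFun (fun ω ↦ (Z ω).1) (fun ω ↦ (Z ω).2) P ∧
      HasLaw (fun ω ↦ (Z ω).1) μ P ∧ HasLaw (fun ω ↦ (Z ω).2) ν P := by
  have law_fst : HasLaw (fun ω ↦ (Z ω).1) μ P := measurePreserving_fst.comp_hasLaw hZ
  have : IsProbabilityMeasure μ := law_fst.isProbabilityMeasure_iff.1 ‹_›
  have law_snd : HasLaw (fun ω ↦ (Z ω).2) ν P := measurePreserving_snd.comp_hasLaw hZ
  exact ⟨(indepFun_iff_hasLaw_prodMk_prod law_fst law_snd).2 hZ, law_fst, law_snd⟩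

theorem sExp_if_part_general {Ω : Type*} [MeasurableSpace Ω] {P : Measure Ω} {X Y : Ω → ℝ}
    {l c₁ c₂ : ℝ} (hl : 0 < l) (hX : HasLaw X (stExpMeasure l (-c₁) c₂) P)
    (hY : HasLaw Y (sExpMeasure l (-c₂)) P) (hXY : IndepFun X Y P) :
    IndepFun (fun ω ↦ (F3 (X ω, Y ω)).1) (fun ω ↦ (F3 (X ω, Y ω)).2) P ∧
      HasLaw (fun ω ↦ (F3 (X ω, Y ω)).1) (stExpMeasure l (-c₂) c₁) P ∧
      HasLaw (fun ω ↦ (F3 (X ω, Y ω)).2) (sExpMeasure l (-c₁)) P := by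
  have := isProbabilityMeasure_sExpMeasure hl (-c₁)
  have := isProbabilityMeasure_sExpMeasure hl (-c₂)
  have : IsProbabilityMeasure P := hY.isProbabilityMeasure
  have law_F3 : HasLaw (fun ω ↦ F3 (X ω, Y ω))
      ((stExpMeasure l (-c₂) c₁).prod (sExpMeasure l (-c₁))) P :=
    (measurePreserving_F3_stExpMeasure_prod_sExpMeasure hl.le c₁ c₂).fun_comp_hasLaw
      (hXY.hasLaw_prod hX hY)
  exact indepFun_and_hasLaw_of_hasLaw_prod law_F3

theorem sExp_if_part
    {Ω : Type*} [MeasureSpace Ω] [IsProbabilityMeasure (ℙ : Measure Ω)]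
    (c₁ c₂ : ℝ) (hc₁ : 0 < c₁) (hc₂ : 0 < c₂)
    (X Y : Ω → ℝ) (hXm : Measurable X) (hYm : Measurable Y)
    (hIndep : IndepFun X Y ℙ)
    (l : ℝ) (hl : 0 < l)
    (hX : Measure.map X ℙ =
      volume.withDensity (fun x => ENNReal.ofReal (stExpPdf l (-c₁) c₂ x)))
    (hY : Measure.map Y ℙ =
      volume.withDensity (fun y => ENNReal.ofReal (sExpPdf l (-c₂) y))) :
    IndepFun (fun ω => (F3 (X ω, Y ω)).1) (fun ω => (F3 (X ω, Y ω)).2) ℙ ∧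
      Measure.map (fun ω => (F3 (X ω, Y ω)).1) ℙ =
        volume.withDensity (fun u => ENNReal.ofReal (stExpPdf l (-c₂) c₁ u)) ∧
      Measure.map (fun ω => (F3 (X ω, Y ω)).2) ℙ =
        volume.withDensity (fun v => ENNReal.ofReal (sExpPdf l (-c₁) v)) := by
  have general := sExp_if_part_general hl ⟨hXm.aemeasurable, hX⟩ ⟨hYm.aemeasurable, hY⟩ hIndep
  exact ⟨general.1, general.2.1.map_eq, general.2.2.map_eq⟩
end
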